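/- (Exact wave identity for the approximate mass metric.) Let M ∈ ℝ and let Ω := {x ∈ ℝ³ : |x| > 0 and |x| > 2M}. On Ω, with r = |x|, define for i,j ∈ {1,2,3}: h̃_{ij}(x) := −(4M log(r−2M)/r) δ_{ij} − (x_i x_j/r²)(2M/r − 4M log(r−2M)/r) and G̃^i(x) := −(4M log(r−2M)/r²)(x^i/r). Then for all i,j ∈ {1,2,3} and all x ∈ Ω: Δ h̃_{ij} + ∂_j G̃^i + ∂_i G̃^j = (16M²(r−M)/(r³(r−2M)²))(δ_{ij} − x_i x_j/r²) − 16M² x_i x_j/(r⁵(r−2M)), where Δ = Σ_k ∂_k² is the Euclidean Laplacian on ℝ³. (Since h̃ and G̃ are time-independent, this is exactly the statement that ⧠_m h̃_{ij} + m_{iλ}∂_j G̃^λ + m_{jλ}∂_i G̃^λ equals the right-hand side, the key O(M²/r³) cancellation underlying Proposition 5.2 of the paper.) -/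

import Mathlib

open MeasureTheory

noncomputable def pd (μ : Fin 4) (f : (Fin 4 → ℝ) → ℝ) (x : Fin 4 → ℝ) : ℝ :=
  fderiv ℝ f x (Pi.single μ 1)

noncomputable def pd3 (i : Fin 3) (f : (Fin 3 → ℝ) → ℝ) (x : Fin 3 → ℝ) : ℝ :=
  fderiv ℝ f x (Pi.single i 1)

noncomputable def rad (p : Fin 4 → ℝ) : ℝ := Real.sqrt (∑ i : Fin 3, (p i.succ) ^ 2)

noncomputable def rad3 (y : Fin 3 → ℝ) : ℝ := Real.sqrt (∑ i : Fin 3, (y i) ^ 2)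

noncomputable def spt (t : ℝ) (y : Fin 3 → ℝ) : Fin 4 → ℝ := ![t, y 0, y 1, y 2]

noncomputable def minkVF : Fin 11 → (Fin 4 → ℝ) → Fin 4 → ℝ :=
  ![fun _ => Pi.single 0 1,
    fun _ => Pi.single 1 1,
    fun _ => Pi.single 2 1,
    fun _ => Pi.single 3 1,
    fun p => p 1 • (Pi.single 2 1 : Fin 4 → ℝ) - p 2 • (Pi.single 1 1 : Fin 4 → ℝ),
    fun p => p 1 • (Pi.single 3 1 : Fin 4 → ℝ) - p 3 • (Pi.single 1 1 : Fin 4 → ℝ),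
    fun p => p 2 • (Pi.single 3 1 : Fin 4 → ℝ) - p 3 • (Pi.single 2 1 : Fin 4 → ℝ),
    fun p => p 0 • (Pi.single 1 1 : Fin 4 → ℝ) + p 1 • (Pi.single 0 1 : Fin 4 → ℝ),
    fun p => p 0 • (Pi.single 2 1 : Fin 4 → ℝ) + p 2 • (Pi.single 0 1 : Fin 4 → ℝ),
    fun p => p 0 • (Pi.single 3 1 : Fin 4 → ℝ) + p 3 • (Pi.single 0 1 : Fin 4 → ℝ),
    fun p => p]

noncomputable def GammaList : List (Fin 11) → ((Fin 4 → ℝ) → ℝ) → (Fin 4 → ℝ) → ℝ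
  | [] => fun f p => f p
  | k :: I => fun f p => fderiv ℝ (GammaList I f) p (minkVF k p)

noncomputable def derivNormSq (f : (Fin 4 → ℝ) → ℝ) (p : Fin 4 → ℝ) : ℝ :=
  ∑ μ : Fin 4, (pd μ f p) ^ 2

noncomputable def derivNorm (f : (Fin 4 → ℝ) → ℝ) (p : Fin 4 → ℝ) : ℝ :=
  Real.sqrt (derivNormSq f p)

noncomputable def dS (f : (Fin 4 → ℝ) → ℝ) (p : Fin 4 → ℝ) : ℝ :=
  (1 / 2) * (pd 0 f p + ∑ i : Fin 3, (p i.succ / rad p) * pd i.succ f p)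

noncomputable def dQ (f : (Fin 4 → ℝ) → ℝ) (p : Fin 4 → ℝ) : ℝ :=
  (1 / 2) * ((∑ i : Fin 3, (p i.succ / rad p) * pd i.succ f p) - pd 0 f p)

noncomputable def angSq (f : (Fin 4 → ℝ) → ℝ) (p : Fin 4 → ℝ) : ℝ :=
  (1 / 2) * (∑ i : Fin 3, ∑ j : Fin 3,
    ((p i.succ / rad p) * pd j.succ f p - (p j.succ / rad p) * pd i.succ f p) ^ 2)

noncomputable def goodNormSq (f : (Fin 4 → ℝ) → ℝ) (p : Fin 4 → ℝ) : ℝ :=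
  (dS f p) ^ 2 + angSq f p

noncomputable def goodNorm (f : (Fin 4 → ℝ) → ℝ) (p : Fin 4 → ℝ) : ℝ :=
  Real.sqrt (goodNormSq f p)

noncomputable def gradSq (f : (Fin 4 → ℝ) → ℝ) (p : Fin 4 → ℝ) : ℝ :=
  (pd 0 f p) ^ 2 + ∑ i : Fin 3, (pd i.succ f p) ^ 2

noncomputable def Lup (p : Fin 4 → ℝ) : Fin 4 → ℝ :=
  ![1, p 1 / rad p, p 2 / rad p, p 3 / rad p]

noncomputable def Llow (p : Fin 4 → ℝ) : Fin 4 → ℝ :=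
  ![-1, p 1 / rad p, p 2 / rad p, p 3 / rad p]

noncomputable def Lbup (p : Fin 4 → ℝ) : Fin 4 → ℝ :=
  ![1, -(p 1 / rad p), -(p 2 / rad p), -(p 3 / rad p)]

noncomputable def Evec : Fin 3 → (Fin 4 → ℝ) → Fin 4 → ℝ :=
  ![fun p => (p 2 / rad p) • (Pi.single 3 1 : Fin 4 → ℝ) - (p 3 / rad p) • (Pi.single 2 1 : Fin 4 → ℝ),
    fun p => (p 1 / rad p) • (Pi.single 3 1 : Fin 4 → ℝ) - (p 3 / rad p) • (Pi.single 1 1 : Fin 4 → ℝ),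
    fun p => (p 1 / rad p) • (Pi.single 2 1 : Fin 4 → ℝ) - (p 2 / rad p) • (Pi.single 1 1 : Fin 4 → ℝ)]

noncomputable def frameVF : Fin 5 → (Fin 4 → ℝ) → Fin 4 → ℝ :=
  ![Lup, Lbup, Evec 0, Evec 1, Evec 2]

noncomputable def mInv : Fin 4 → Fin 4 → ℝ :=
  fun α β => if α = β then (if α = 0 then -1 else 1) else 0

noncomputable def wgt (γ q : ℝ) : ℝ :=
  if 0 ≤ q then 1 + (1 + |q|) ^ (1 + 2 * γ) else 1 + (1 + |q|) ^ (-(γ / 2))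

noncomputable def wgt' (γ q : ℝ) : ℝ :=
  if 0 ≤ q then (1 + 2 * γ) * (1 + |q|) ^ (2 * γ) else (γ / 2) * (1 + |q|) ^ (-(γ / 2) - 1)

noncomputable def matNorm (H : (Fin 4 → ℝ) → Fin 4 → Fin 4 → ℝ) (p : Fin 4 → ℝ) : ℝ :=
  Real.sqrt (∑ α : Fin 4, ∑ β : Fin 4, (H p α β) ^ 2)

noncomputable def matLL (H : (Fin 4 → ℝ) → Fin 4 → Fin 4 → ℝ) (p : Fin 4 → ℝ) : ℝ :=
  |∑ α : Fin 4, ∑ β : Fin 4, H p α β * Llow p α * Llow p β|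

noncomputable def dmatNorm (H : (Fin 4 → ℝ) → Fin 4 → Fin 4 → ℝ) (p : Fin 4 → ℝ) : ℝ :=
  Real.sqrt (∑ c : Fin 4, ∑ α : Fin 4, ∑ β : Fin 4, (pd c (fun y => H y α β) p) ^ 2)

noncomputable def dmatLL (H : (Fin 4 → ℝ) → Fin 4 → Fin 4 → ℝ) (p : Fin 4 → ℝ) : ℝ :=
  Real.sqrt (∑ u : Fin 5,
    (∑ α : Fin 4, ∑ β : Fin 4,
      fderiv ℝ (fun y => H y α β) p (frameVF u p) * Llow p α * Llow p β) ^ 2)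

noncomputable def gdmatNorm (H : (Fin 4 → ℝ) → Fin 4 → Fin 4 → ℝ) (p : Fin 4 → ℝ) : ℝ :=
  Real.sqrt (∑ α : Fin 4, ∑ β : Fin 4, goodNormSq (fun y => H y α β) p)

/-- The spatial part `h̃_{ij}` of the approximate mass metric. -/
noncomputable def htil (M : ℝ) (i j : Fin 3) (y : Fin 3 → ℝ) : ℝ :=
  -(4 * M * Real.log (rad3 y - 2 * M) / rad3 y) * (if i = j then 1 else 0)
    - (y i * y j / (rad3 y) ^ 2)
        * (2 * M / rad3 y - 4 * M * Real.log (rad3 y - 2 * M) / rad3 y)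

/-- The gauge source vector `G̃^i`. -/
noncomputable def Gtil (M : ℝ) (i : Fin 3) (y : Fin 3 → ℝ) : ℝ :=
  -(4 * M * Real.log (rad3 y - 2 * M) / (rad3 y) ^ 2) * (y i / rad3 y)

noncomputable def PJ (i : Fin 3) : (Fin 3 → ℝ) →L[ℝ] ℝ := ContinuousLinearMap.proj i

noncomputable def DR (y : Fin 3 → ℝ) : (Fin 3 → ℝ) →L[ℝ] ℝ :=
  ∑ i : Fin 3, (y i / rad3 y) • PJ i

lemma PJ_single (i k : Fin 3) : PJ i (Pi.single k 1) = if i = k then 1 else 0 := by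
  simp [PJ, Pi.single_apply]

lemma DR_single (y : Fin 3 → ℝ) (k : Fin 3) : DR y (Pi.single k 1) = y k / rad3 y := by
  simp [DR, PJ_single]

lemma PJ_has (i : Fin 3) (y : Fin 3 → ℝ) : HasFDerivAt (fun y : Fin 3 → ℝ => y i) (PJ i) y :=
  (PJ i).hasFDerivAt

lemma rad3_has (y : Fin 3 → ℝ) (h : 0 < rad3 y) : HasFDerivAt rad3 (DR y) y := by
  have h1 : (∑ i : Fin 3, (y i) ^ 2) ≠ 0 := by
    intro h2
    simp only [rad3, h2, Real.sqrt_zero, lt_irrefl] at h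
  have h3 : HasFDerivAt (fun y : Fin 3 → ℝ => ∑ i : Fin 3, (y i) ^ 2)
      (∑ i : Fin 3, (2 * y i) • PJ i) y := by
    refine HasFDerivAt.fun_sum (fun i _ => ?_)
    have := (PJ_has i y).pow 2
    simpa using this
  have h4 := h3.sqrt h1
  refine h4.congr_fderiv ?_
  rw [DR, Finset.smul_sum]
  refine Finset.sum_congr rfl (fun i _ => ?_)
  rw [smul_smul]
  congr 1
  change 1 / (2 * rad3 y) * (2 * y i) = y i / rad3 y
  field_simp

lemma comp_has (f : ℝ → ℝ) (f' : ℝ) (y : Fin 3 → ℝ) (h : 0 < rad3 y)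
    (hf : HasDerivAt f f' (rad3 y)) :
    HasFDerivAt (fun y => f (rad3 y)) (f' • DR y) y :=
  hf.comp_hasFDerivAt y (rad3_has y h)

lemma rad3_cont : Continuous rad3 := by unfold rad3; fun_prop

noncomputable def fa (M r : ℝ) : ℝ := -(4 * M * Real.log (r - 2 * M) / r)
noncomputable def fb (M r : ℝ) : ℝ := (4 * M * Real.log (r - 2 * M) - 2 * M) / r ^ 3
noncomputable def fg (M r : ℝ) : ℝ := -(4 * M * Real.log (r - 2 * M)) / r ^ 3
/-- a'/r -/
noncomputable def fA (M r : ℝ) : ℝ :=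
  -(4 * M / ((r - 2 * M) * r ^ 2)) + 4 * M * Real.log (r - 2 * M) / r ^ 3
/-- b'/r -/
noncomputable def fB (M r : ℝ) : ℝ :=
  4 * M / ((r - 2 * M) * r ^ 4) - 3 * (4 * M * Real.log (r - 2 * M) - 2 * M) / r ^ 5

section
variable (M r : ℝ) (h0 : 0 < r) (hM : 2 * M < r)

lemma log_has (hM : 2 * M < r) :
    HasDerivAt (fun r => Real.log (r - 2 * M)) (1 / (r - 2 * M)) r := by
  have := ((hasDerivAt_id r).sub_const (2 * M)).log (by simp; linarith)
  simpa using this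

lemma fa_has (h0 : 0 < r) (hM : 2 * M < r) : HasDerivAt (fa M) (r * fA M r) r := by
  have hs : r - 2 * M ≠ 0 := by linarith
  have := (((log_has M r hM).const_mul (4 * M)).div (hasDerivAt_id r) h0.ne').neg
  refine this.congr_deriv ?_
  simp only [fA, id]
  field_simp
  ring

lemma fb_has (h0 : 0 < r) (hM : 2 * M < r) : HasDerivAt (fb M) (r * fB M r) r := by
  have hs : r - 2 * M ≠ 0 := by linarith
  have := (((log_has M r hM).const_mul (4 * M)).sub_const (2 * M)).div (hasDerivAt_pow 3 r)
    (pow_ne_zero 3 h0.ne')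
  refine this.congr_deriv ?_
  simp only [fB]
  field_simp
  push_cast
  ring

lemma fg_has (h0 : 0 < r) (hM : 2 * M < r) : HasDerivAt (fg M)
    (-(4 * M) / ((r - 2 * M) * r ^ 3) + 12 * M * Real.log (r - 2 * M) / r ^ 4) r := by
  have hs : r - 2 * M ≠ 0 := by linarith
  have := (((log_has M r hM).const_mul (4 * M)).fun_neg).div (hasDerivAt_pow 3 r)
    (pow_ne_zero 3 h0.ne')
  refine this.congr_deriv ?_
  field_simp
  push_cast
  ring

lemma fA_has (h0 : 0 < r) (hM : 2 * M < r) : HasDerivAt (fA M)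
    (4 * M / ((r - 2 * M) ^ 2 * r ^ 2) + 12 * M / ((r - 2 * M) * r ^ 3)
      - 12 * M * Real.log (r - 2 * M) / r ^ 4) r := by
  have hs : r - 2 * M ≠ 0 := by linarith
  have h1 := ((hasDerivAt_const r (4 * M)).div
    (((hasDerivAt_id r).sub_const (2 * M)).mul (hasDerivAt_pow 2 r))
    (mul_ne_zero hs (pow_ne_zero 2 h0.ne'))).neg
  have h2 := ((log_has M r hM).const_mul (4 * M)).div (hasDerivAt_pow 3 r)
    (pow_ne_zero 3 h0.ne')
  refine (h1.add h2).congr_deriv ?_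
  simp only [id, Pi.mul_apply]
  field_simp
  push_cast
  ring

lemma fB_has (h0 : 0 < r) (hM : 2 * M < r) : HasDerivAt (fB M)
    (-(4 * M) / ((r - 2 * M) ^ 2 * r ^ 4) - 28 * M / ((r - 2 * M) * r ^ 5)
      + 15 * (4 * M * Real.log (r - 2 * M) - 2 * M) / r ^ 6) r := by
  have hs : r - 2 * M ≠ 0 := by linarith
  have h1 := ((hasDerivAt_const r (4 * M)).div
    (((hasDerivAt_id r).sub_const (2 * M)).mul (hasDerivAt_pow 4 r))
    (mul_ne_zero hs (pow_ne_zero 4 h0.ne')))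
  have h2 := ((((log_has M r hM).const_mul (4 * M)).sub_const (2 * M)).const_mul 3).div
    (hasDerivAt_pow 5 r) (pow_ne_zero 5 h0.ne')
  refine (h1.sub h2).congr_deriv ?_
  simp only [id, Pi.mul_apply]
  field_simp
  push_cast
  ring
end

lemma htil_eq (M : ℝ) (i j : Fin 3) : htil M i j =
    fun y => fa M (rad3 y) * (if i = j then 1 else 0) + fb M (rad3 y) * (y i * y j) := by
  funext y
  simp only [htil, fa, fb]
  by_cases h : rad3 y = 0
  · simp [h]
  · field_simp
    ring

lemma Gtil_eq (M : ℝ) (i : Fin 3) : Gtil M i = fun y => fg M (rad3 y) * y i := by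
  funext y
  simp only [Gtil, fg]
  by_cases h : rad3 y = 0
  · simp [h]
  · field_simp

lemma pd_G (M : ℝ) (i k : Fin 3) (x : Fin 3 → ℝ) (h0 : 0 < rad3 x) (hM : 2 * M < rad3 x) :
    pd3 k (Gtil M i) x = fg M (rad3 x) * (if i = k then 1 else 0) +
      (-(4 * M) / ((rad3 x - 2 * M) * rad3 x ^ 3)
        + 12 * M * Real.log (rad3 x - 2 * M) / rad3 x ^ 4) * (x k / rad3 x) * x i := by
  have h := (comp_has _ _ x h0 (fg_has M _ h0 hM)).mul (PJ_has i x)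
  rw [pd3, Gtil_eq]
  erw [HasFDerivAt.fderiv h]
  simp [DR_single, PJ_single]
  ring

lemma pd_h (M : ℝ) (i j k : Fin 3) (x : Fin 3 → ℝ) (h0 : 0 < rad3 x) (hM : 2 * M < rad3 x) :
    pd3 k (htil M i j) x = fA M (rad3 x) * (x k * (if i = j then 1 else 0)) +
      (fB M (rad3 x) * (x k * (x i * x j)) + fb M (rad3 x) *
        (x i * (if j = k then 1 else 0) + x j * (if i = k then 1 else 0))) := by
  have h1 := (comp_has _ _ x h0 (fa_has M _ h0 hM)).mul_const (if i = j then 1 else 0)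
  have h2 := (comp_has _ _ x h0 (fb_has M _ h0 hM)).mul ((PJ_has i x).mul (PJ_has j x))
  have h := h1.add h2
  rw [pd3, htil_eq]
  erw [HasFDerivAt.fderiv h]
  simp only [add_apply, smul_apply, DR_single, PJ_single,
    smul_eq_mul, Pi.mul_apply]
  have := h0.ne'
  field_simp
  try ring

lemma pd_pd_h (M : ℝ) (i j k : Fin 3) (x : Fin 3 → ℝ) (h0 : 0 < rad3 x) (hM : 2 * M < rad3 x) :
    pd3 k (fun y => pd3 k (htil M i j) y) x =
      (4 * M / ((rad3 x - 2 * M) ^ 2 * rad3 x ^ 2) + 12 * M / ((rad3 x - 2 * M) * rad3 x ^ 3)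
        - 12 * M * Real.log (rad3 x - 2 * M) / rad3 x ^ 4) * (x k / rad3 x)
          * (x k * (if i = j then 1 else 0))
      + fA M (rad3 x) * (if i = j then 1 else 0)
      + (-(4 * M) / ((rad3 x - 2 * M) ^ 2 * rad3 x ^ 4) - 28 * M / ((rad3 x - 2 * M) * rad3 x ^ 5)
        + 15 * (4 * M * Real.log (rad3 x - 2 * M) - 2 * M) / rad3 x ^ 6) * (x k / rad3 x)
          * (x k * (x i * x j))
      + fB M (rad3 x) * (x i * x j + x k *
        (x i * (if j = k then 1 else 0) + x j * (if i = k then 1 else 0)))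
      + rad3 x * fB M (rad3 x) * (x k / rad3 x) *
        (x i * (if j = k then 1 else 0) + x j * (if i = k then 1 else 0))
      + fb M (rad3 x) * (2 * ((if i = k then 1 else 0) * (if j = k then 1 else 0))) := by
  have he : (fun y => pd3 k (htil M i j) y) =ᶠ[nhds x] fun x =>
      fA M (rad3 x) * (x k * (if i = j then 1 else 0)) +
      (fB M (rad3 x) * (x k * (x i * x j)) + fb M (rad3 x) *
        (x i * (if j = k then 1 else 0) + x j * (if i = k then 1 else 0))) := by
    filter_upwards [rad3_cont.continuousAt.eventually (lt_mem_nhds h0),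
      rad3_cont.continuousAt.eventually (lt_mem_nhds hM)] with y hy1 hy2
    exact pd_h M i j k y hy1 hy2
  have h1 := (comp_has _ _ x h0 (fA_has M _ h0 hM)).mul
    ((PJ_has k x).mul_const (if i = j then (1:ℝ) else 0))
  have h2 := (comp_has _ _ x h0 (fB_has M _ h0 hM)).mul
    ((PJ_has k x).mul ((PJ_has i x).mul (PJ_has j x)))
  have h3 := (comp_has _ _ x h0 (fb_has M _ h0 hM)).mul
    (((PJ_has i x).mul_const (if j = k then (1:ℝ) else 0)).add
      ((PJ_has j x).mul_const (if i = k then (1:ℝ) else 0)))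
  have h := h1.add (h2.add h3)
  rw [pd3, he.fderiv_eq]
  erw [HasFDerivAt.fderiv h]
  simp only [add_apply, smul_apply, DR_single, PJ_single,
    smul_eq_mul, Pi.mul_apply, Pi.add_apply, if_true]
  ring

theorem stmt15 (M : ℝ) (i j : Fin 3) (x : Fin 3 → ℝ)
    (h0 : 0 < rad3 x) (hM : 2 * M < rad3 x) :
    (∑ k : Fin 3, pd3 k (fun y => pd3 k (htil M i j) y) x)
        + pd3 j (Gtil M i) x + pd3 i (Gtil M j) x
      = (16 * M ^ 2 * (rad3 x - M) / ((rad3 x) ^ 3 * (rad3 x - 2 * M) ^ 2))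
            * ((if i = j then 1 else 0) - x i * x j / (rad3 x) ^ 2)
          - 16 * M ^ 2 * x i * x j / ((rad3 x) ^ 5 * (rad3 x - 2 * M)) := by
  have hr : x 0 ^ 2 + x 1 ^ 2 + x 2 ^ 2 = rad3 x ^ 2 := by
    rw [rad3, Real.sq_sqrt (Finset.sum_nonneg fun i _ => sq_nonneg _), Fin.sum_univ_three]
  simp only [pd_pd_h M i j _ x h0 hM, pd_G M _ _ x h0 hM]
  have e1 : ∀ c : Fin 3, ∑ k : Fin 3, x k * (if c = k then (1:ℝ) else 0) = x c := by
    intro c; simp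
  have e2 : ∑ k : Fin 3, (if i = k then (1:ℝ) else 0) * (if j = k then 1 else 0)
      = if i = j then 1 else 0 := by
    simp [eq_comm]
  have e3 : (if j = i then (1:ℝ) else 0) = if i = j then 1 else 0 := by simp [eq_comm]
  have e1i := e1 i
  have e1j := e1 j
  rw [e3]
  rw [Fin.sum_univ_three] at e1i e1j e2 ⊢
  generalize (if i = j then (1:ℝ) else 0) = d at *
  generalize (if i = 0 then (1:ℝ) else 0) = i0 at *
  generalize (if i = 1 then (1:ℝ) else 0) = i1 at *
  generalize (if i = 2 then (1:ℝ) else 0) = i2 at *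
  generalize (if j = 0 then (1:ℝ) else 0) = j0 at *
  generalize (if j = 1 then (1:ℝ) else 0) = j1 at *
  generalize (if j = 2 then (1:ℝ) else 0) = j2 at *
  generalize x i = p at *
  generalize x j = q at *
  generalize x 0 = x0 at *
  generalize x 1 = x1 at *
  generalize x 2 = x2 at *
  generalize rad3 x = r at *
  have hs : r - 2 * M ≠ 0 := by linarith
  have hr0 := h0.ne'
  simp only [fA, fB, fb, fg]
  generalize Real.log (r - 2 * M) = L
  obtain ⟨s, rfl⟩ : ∃ s, r = s + 2 * M := ⟨r - 2 * M, by ring⟩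
  have hM' : ∃ N, N = M := ⟨M, rfl⟩
  set r := s + 2 * M with hrr
  have hs' : r - 2 * M = s := by rw [hrr]; ring
  have hs0 : s ≠ 0 := by rw [← hs']; exact hs
  rw [hs']
  set A2 := 4 * M / (s ^ 2 * r ^ 2) + 12 * M / (s * r ^ 3) - 12 * M * L / r ^ 4 with hA2
  set B2 := -(4 * M) / (s ^ 2 * r ^ 4) - 28 * M / (s * r ^ 5)
    + 15 * (4 * M * L - 2 * M) / r ^ 6 with hB2
  set A := -(4 * M / (s * r ^ 2)) + 4 * M * L / r ^ 3 with hA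
  set B := 4 * M / (s * r ^ 4) - 3 * (4 * M * L - 2 * M) / r ^ 5 with hB
  set b := (4 * M * L - 2 * M) / r ^ 3 with hb
  have key : r * A2 * d + 3 * A * d + r * B2 * (p * q) + 3 * B * (p * q) + 4 * B * (p * q)
      + 2 * b * d + 2 * (-(4 * M * L) / r ^ 3) * d
      + 2 * (-(4 * M) / (s * r ^ 3) + 12 * M * L / r ^ 4) / r * (p * q)
      = 16 * M ^ 2 * (r - M) / (r ^ 3 * s ^ 2) * (d - p * q / r ^ 2)
        - 16 * M ^ 2 * p * q / (r ^ 5 * s) := by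
    have hMs : M = (r - s) / 2 := by rw [hrr]; ring
    rw [hA2, hB2, hA, hB, hb]
    clear_value r
    subst hMs
    field_simp
    ring
  have rB : r * B * (1 / r) = B := by field_simp
  have r1 : A2 * (1 / r) * r ^ 2 = r * A2 := by field_simp
  have r2 : B2 * (1 / r) * r ^ 2 = r * B2 := by field_simp
  rw [← key, ← r1, ← r2, ← hr]
  linear_combination (2 * b) * e2 + (B + r * B * (1 / r)) * (p * e1j + q * e1i) + 2 * p * q * rB
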